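/- (Theorem 12: outer bound on the ID capacity region of the BC with one-sided feedback.) The ID capacity region 𝒞_{1-fb} of the BC W(y,z|x) with one-sided feedback from Terminal 𝒴 is contained in the set of all rate pairs (R_𝒴, R_𝒵) ∈ [0,∞)² for which some PMF P on 𝒳 satisfies R_𝒴 ≤ H(PW_𝒴)·𝟙{max_{P'} I(P', W_𝒴) > 0} and R_𝒵 ≤ I((X,Y); Z)·𝟙{max_{P'} I(P', W_𝒵) > 0}, where I((X,Y); Z) is the mutual information between the pair (X,Y) and Z when (X,Y,Z) has joint law P(x)·W(y,z|x). -/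

import Mathlib

open scoped Classical
open Finset

noncomputable section

/-- `P` is a probability mass function on the finite type `X`. -/
def IsPMF {X : Type*} [Fintype X] (P : X → ℝ) : Prop :=
  (∀ x, 0 ≤ P x) ∧ ∑ x, P x = 1

/-- `W` is a (discrete memoryless) channel from `X` to `Y`. -/
def IsChannel {X Y : Type*} [Fintype Y] (W : X → Y → ℝ) : Prop :=
  (∀ x y, 0 ≤ W x y) ∧ ∀ x, ∑ y, W x y = 1

/-- The `n`-fold memoryless extension `W^n(𝐲|𝐱) = ∏ᵢ W(yᵢ|xᵢ)`. -/
def Wn {X Y : Type*} (W : X → Y → ℝ) (n : ℕ) (x : Fin n → X) (y : Fin n → Y) : ℝ :=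
  ∏ i, W (x i) (y i)

/-- Mutual information `I(P,W)` (natural logarithm), with the convention that
terms with `P x * W x y = 0` contribute `0`. -/
def mutInf {X Y : Type*} [Fintype X] [Fintype Y] (P : X → ℝ) (W : X → Y → ℝ) : ℝ :=
  ∑ x, ∑ y, if P x * W x y = 0 then 0
    else P x * W x y * Real.log (W x y / ∑ x', P x' * W x' y)

/-- The error requirements of an `(n, M, l1, l2)` ID code for the DMC `W`:
maximum probability of missed identification at most `l1`, maximum probability
of wrong identification at most `l2`. -/
def IDCodeErr {X Y M : Type*} [Fintype X] [Fintype Y]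
    (n : ℕ) (W : X → Y → ℝ) (Q : M → (Fin n → X) → ℝ)
    (D : M → Finset (Fin n → Y)) (l1 l2 : ℝ) : Prop :=
  (∀ m, ∑ x, Q m x * ∑ y ∈ (D m)ᶜ, Wn W n x y ≤ l1) ∧
  (∀ m m', m ≠ m' → ∑ x, Q m x * ∑ y ∈ D m', Wn W n x y ≤ l2)

/-- `(n, M, l1, l2)` ID code for the DMC `W`. -/
def IsIDCode {X Y M : Type*} [Fintype X] [Fintype Y]
    (n : ℕ) (W : X → Y → ℝ) (Q : M → (Fin n → X) → ℝ)
    (D : M → Finset (Fin n → Y)) (l1 l2 : ℝ) : Prop :=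
  (∀ m, IsPMF (Q m)) ∧ IDCodeErr n W Q D l1 l2

/-- `W` is a two-receiver broadcast channel from `X` to `Y × Z`. -/
def IsBC {X Y Z : Type*} [Fintype Y] [Fintype Z] (W : X → Y → Z → ℝ) : Prop :=
  (∀ x y z, 0 ≤ W x y z) ∧ ∀ x, ∑ y, ∑ z, W x y z = 1

/-- Marginal channel to terminal `Y`. -/
def margY {X Y Z : Type*} [Fintype Z] (W : X → Y → Z → ℝ) : X → Y → ℝ :=
  fun x y => ∑ z, W x y z

/-- Marginal channel to terminal `Z`. -/
def margZ {X Y Z : Type*} [Fintype Y] (W : X → Y → Z → ℝ) : X → Z → ℝ :=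
  fun x z => ∑ y, W x y z

/-- Entropy `H(p)` of a PMF (natural logarithm), with `0 log 0 = 0`. -/
def entH {Y : Type*} [Fintype Y] (p : Y → ℝ) : ℝ :=
  ∑ y, if p y = 0 then 0 else -(p y * Real.log (p y))

/-- Output distribution `PW` of the channel `W` under input PMF `P`. -/
def outDist {X Y : Type*} [Fintype X] (P : X → ℝ) (W : X → Y → ℝ) : Y → ℝ :=
  fun y => ∑ x, P x * W x y

/-- The joint law on `(𝐱, 𝐲, 𝐳)` induced by a feedback encoder
`Q^{(i)}(x | x^{i-1}, y^{i-1})` and the BC `W`. -/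
def fbLaw {X Y Z : Type*} (n : ℕ) (W : X → Y → Z → ℝ)
    (Q : (i : ℕ) → (Fin i → X) → (Fin i → Y) → X → ℝ)
    (x : Fin n → X) (y : Fin n → Y) (z : Fin n → Z) : ℝ :=
  ∏ i : Fin n,
    (Q i.1 (fun j : Fin i.1 => x ⟨j.1, lt_trans j.isLt i.isLt⟩)
           (fun j : Fin i.1 => y ⟨j.1, lt_trans j.isLt i.isLt⟩) (x i)
      * W (x i) (y i) (z i))

/-- `Q` is a feedback encoder for blocklength `n`: at each time `i < n` and for
all histories, it is a PMF on `X`. -/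
def IsFBEncoder {X Y : Type*} [Fintype X] (n : ℕ)
    (Q : (i : ℕ) → (Fin i → X) → (Fin i → Y) → X → ℝ) : Prop :=
  ∀ i < n, ∀ (xs : Fin i → X) (ys : Fin i → Y), IsPMF (Q i xs ys)

/-- Average-error ID code for the BC with one-sided feedback from Terminal Y. -/
def IsFBIDCode {X Y Z : Type*} [Fintype X] [Fintype Y] [Fintype Z]
    (n kY kZ : ℕ) (W : X → Y → Z → ℝ)
    (Q : Fin kY → Fin kZ → (i : ℕ) → (Fin i → X) → (Fin i → Y) → X → ℝ)
    (DY : Fin kY → Finset (Fin n → Y)) (DZ : Fin kZ → Finset (Fin n → Z))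
    (l1Y l2Y l1Z l2Z : ℝ) : Prop :=
  (∀ my mz, IsFBEncoder n (Q my mz)) ∧
  (∀ my, (kZ : ℝ)⁻¹ * ∑ mz, ∑ x : Fin n → X, ∑ y ∈ (DY my)ᶜ, ∑ z : Fin n → Z,
      fbLaw n W (Q my mz) x y z ≤ l1Y) ∧
  (∀ my my', my ≠ my' → (kZ : ℝ)⁻¹ * ∑ mz, ∑ x : Fin n → X, ∑ y ∈ DY my',
      ∑ z : Fin n → Z, fbLaw n W (Q my mz) x y z ≤ l2Y) ∧
  (∀ mz, (kY : ℝ)⁻¹ * ∑ my, ∑ x : Fin n → X, ∑ y : Fin n → Y, ∑ z ∈ (DZ mz)ᶜ,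
      fbLaw n W (Q my mz) x y z ≤ l1Z) ∧
  (∀ mz mz', mz ≠ mz' → (kY : ℝ)⁻¹ * ∑ my, ∑ x : Fin n → X, ∑ y : Fin n → Y,
      ∑ z ∈ DZ mz', fbLaw n W (Q my mz) x y z ≤ l2Z)

/-- A rate pair is achievable for the BC with one-sided feedback from
Terminal Y under the average-error criterion. -/
def FBAchievable {X Y Z : Type*} [Fintype X] [Fintype Y] [Fintype Z]
    (W : X → Y → Z → ℝ) (Rp : ℝ × ℝ) : Prop :=
  0 ≤ Rp.1 ∧ 0 ≤ Rp.2 ∧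
  ∀ l1Y l2Y l1Z l2Z : ℝ, 0 < l1Y → 0 < l2Y → 0 < l1Z → 0 < l2Z →
    ∃ n₀ : ℕ, ∀ n : ℕ, n₀ ≤ n →
      ∃ (kY kZ : ℕ)
        (Q : Fin kY → Fin kZ → (i : ℕ) → (Fin i → X) → (Fin i → Y) → X → ℝ)
        (DY : Fin kY → Finset (Fin n → Y)) (DZ : Fin kZ → Finset (Fin n → Z)),
        IsFBIDCode n kY kZ W Q DY DZ l1Y l2Y l1Z l2Z ∧
        ((0 < Rp.1 → Rp.1 ≤ (1 / n) * Real.log (Real.log kY)) ∧ (Rp.1 = 0 → kY = 1)) ∧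
        ((0 < Rp.2 → Rp.2 ≤ (1 / n) * Real.log (Real.log kZ)) ∧ (Rp.2 = 0 → kZ = 1))

/-- Mutual information `I((X,Y); Z)` when `(X,Y,Z)` has joint law
`P(x) W(y,z|x)` (natural logarithm, zero terms by convention). -/
def mutInfXY_Z {X Y Z : Type*} [Fintype X] [Fintype Y] [Fintype Z]
    (P : X → ℝ) (W : X → Y → Z → ℝ) : ℝ :=
  ∑ x, ∑ y, ∑ z,
    if P x * W x y z = 0 then 0
    else P x * W x y z *
      Real.log ((P x * W x y z) /
        (P x * margY W x y * ∑ x', ∑ y', P x' * W x' y' z))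

/-!
Feedback only shapes the law of the pair `(Xⁿ, Yⁿ)`. Given this pair, Terminal `𝒴` observes the
noiseless memoryless channel `(x, y) ↦ y` and Terminal `𝒵` the memoryless channel `P(z|x, y)`, so
each terminal holds an identification code for a channel with input `(X, Y)` but without feedback,
whose input laws are those feedback can generate, averaged over the message of the other terminal.

Soft covering replaces each input law by the empirical law of about `exp (n I)` sampled words while
hardly changing the output law. Messages represented by the same sample would be indistinguishable,
so the number of messages is at most `(|𝒳| |𝒴|) ^ (n exp (n I))`, and its iterated logarithm is at
most about `n I`. The sample size is governed by the information density, which concentrates around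
a linear function of the type of `𝐱` (this is where the martingale structure of feedback enters).

Both terminals must be bounded at the same input distribution `P`: finitely many small
neighborhoods cover the simplex of types, and one of them carries a constant fraction of the
probability averaged over both messages, hence concerns a constant fraction of the messages of
either terminal. Compactness of the simplex passes to the limit. A constant marginal channel carries
no rate at all, because all output laws then coincide.
-/

section MutualInformation

variable {X Y : Type*} [Fintype X] [Fintype Y] {P : X → ℝ} {W : X → Y → ℝ}

lemma isPMF_outDist (hP : IsPMF P) (hW : IsChannel W) : IsPMF (outDist P W) := by
  refine ⟨fun y => sum_nonneg fun x _ => mul_nonneg (hP.1 x) (hW.1 x y), ?_⟩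
  simp only [outDist]
  rw [sum_comm]
  simp only [← mul_sum, hW.2, mul_one, hP.2]

omit [Fintype Y] in
lemma mul_le_outDist (hP : ∀ x, 0 ≤ P x) (hW : ∀ x y, 0 ≤ W x y) (x : X) (y : Y) :
    P x * W x y ≤ outDist P W y :=
  single_le_sum (f := fun x => P x * W x y) (fun x _ => mul_nonneg (hP x) (hW x y)) (mem_univ x)

omit [Fintype X] in
lemma entH_eq_sum_negMulLog (p : Y → ℝ) : entH p = ∑ y, Real.negMulLog (p y) := by
  refine sum_congr rfl fun y _ => ?_
  split_ifs with h <;> simp [h, Real.negMulLog]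

lemma mutInf_eq_sum_klFun (hP : IsPMF P) (hW : IsChannel W) :
    mutInf P W =
      ∑ x, ∑ y, P x * outDist P W y * InformationTheory.klFun (W x y / outDist P W y) := by
  have term (x : X) (y : Y) :
      (if P x * W x y = 0 then 0 else P x * W x y * Real.log (W x y / outDist P W y)) =
        P x * outDist P W y * InformationTheory.klFun (W x y / outDist P W y) +
          (P x * W x y - P x * outDist P W y) := by
    rw [InformationTheory.klFun_apply]
    split_ifs with h
    · rcases mul_eq_zero.1 h with h | h <;> simp [h]
    · have ho : outDist P W y ≠ 0 := fun ho => h <| le_antisymm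
        (ho ▸ mul_le_outDist hP.1 hW.1 x y) (mul_nonneg (hP.1 x) (hW.1 x y))
      field_simp
      ring
  have hbalance : ∑ x, ∑ y, (P x * W x y - P x * outDist P W y) = 0 := by
    simp only [sum_sub_distrib, ← mul_sum, hW.2, (isPMF_outDist hP hW).2, sub_self, sum_const_zero]
  calc mutInf P W
      = ∑ x, ∑ y, if P x * W x y = 0 then 0
          else P x * W x y * Real.log (W x y / outDist P W y) := rfl
    _ = _ := by simp only [term, sum_add_distrib, hbalance, add_zero]

lemma mul_klFun_nonneg (hP : IsPMF P) (hW : IsChannel W) (x : X) (y : Y) :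
    0 ≤ P x * outDist P W y * InformationTheory.klFun (W x y / outDist P W y) :=
  have ho := (isPMF_outDist hP hW).1 y
  mul_nonneg (mul_nonneg (hP.1 x) ho)
    (InformationTheory.klFun_nonneg (div_nonneg (hW.1 x y) ho))

lemma mutInf_nonneg (hP : IsPMF P) (hW : IsChannel W) : 0 ≤ mutInf P W := by
  rw [mutInf_eq_sum_klFun hP hW]
  exact sum_nonneg fun x _ => sum_nonneg fun y _ => mul_klFun_nonneg hP hW x y

lemma eq_outDist_of_mutInf_nonpos (hP : IsPMF P) (hpos : ∀ x, 0 < P x) (hW : IsChannel W)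
    (h : mutInf P W ≤ 0) (x : X) (y : Y) : W x y = outDist P W y := by
  have hzero : P x * outDist P W y * InformationTheory.klFun (W x y / outDist P W y) = 0 := by
    refine le_antisymm ?_ (mul_klFun_nonneg hP hW x y)
    rw [mutInf_eq_sum_klFun hP hW] at h
    exact ((single_le_sum (fun y _ => mul_klFun_nonneg hP hW x y) (mem_univ y)).trans
      (single_le_sum (f := fun x => ∑ y, P x * outDist P W y * _)
        (fun x _ => sum_nonneg fun y _ => mul_klFun_nonneg hP hW x y) (mem_univ x))).trans h
  have ho := (isPMF_outDist hP hW).1 y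
  rcases mul_eq_zero.1 hzero with h | h
  · have ho : outDist P W y = 0 := (mul_eq_zero.1 h).resolve_left (hpos x).ne'
    have hle := mul_le_outDist hP.1 hW.1 x y
    rw [ho] at hle ⊢
    exact le_antisymm (nonpos_of_mul_nonpos_right hle (hpos x)) (hW.1 x y)
  · exact eq_of_div_eq_one
      ((InformationTheory.klFun_eq_zero_iff (div_nonneg (hW.1 x y) ho)).1 h)

lemma exists_forall_eq_of_forall_mutInf_nonpos [Nonempty X] (hW : IsChannel W)
    (h : ∀ P, IsPMF P → mutInf P W ≤ 0) : ∃ q, ∀ x, W x = q := by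
  have hunif : IsPMF fun _ : X => (Fintype.card X : ℝ)⁻¹ :=
    ⟨fun _ => by positivity, by simp⟩
  exact ⟨_, fun x => funext <|
    eq_outDist_of_mutInf_nonpos hunif (fun _ => by positivity) hW (h _ hunif) x⟩

lemma mutInf_eq_sum_add_entH (hP : ∀ x, 0 ≤ P x) (hW : ∀ x y, 0 ≤ W x y) :
    mutInf P W = ∑ x, P x * ∑ y, W x y * Real.log (W x y) + entH (outDist P W) := by
  have term (x : X) (y : Y) :
      (if P x * W x y = 0 then 0 else P x * W x y * Real.log (W x y / outDist P W y)) =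
        P x * (W x y * Real.log (W x y)) - P x * W x y * Real.log (outDist P W y) := by
    split_ifs with h
    · rcases mul_eq_zero.1 h with h | h <;> simp [h]
    · have ho : outDist P W y ≠ 0 := fun ho => h <| le_antisymm
        (ho ▸ mul_le_outDist hP hW x y) (mul_nonneg (hP x) (hW x y))
      rw [Real.log_div (right_ne_zero_of_mul h) ho]
      ring
  have hentropy : entH (outDist P W) = -∑ x, ∑ y, P x * W x y * Real.log (outDist P W y) := by
    rw [entH_eq_sum_negMulLog, sum_comm, ← sum_neg_distrib]
    refine sum_congr rfl fun y _ => ?_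
    rw [← sum_mul, Real.negMulLog, neg_mul]
    rfl
  rw [hentropy]
  calc mutInf P W
      = ∑ x, ∑ y, if P x * W x y = 0 then 0
          else P x * W x y * Real.log (W x y / outDist P W y) := rfl
    _ = _ := by simp only [term, sum_sub_distrib, mul_sum, ← sub_eq_add_neg]

lemma continuousOn_mutInf (hW : ∀ x y, 0 ≤ W x y) :
    ContinuousOn (fun P => mutInf P W) {P | ∀ x, 0 ≤ P x} := by
  refine ContinuousOn.congr (f := fun P : X → ℝ =>
      ∑ x, P x * ∑ y, W x y * Real.log (W x y) + entH (outDist P W))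
    (Continuous.continuousOn ?_) fun P hP => mutInf_eq_sum_add_entH hP hW
  simp only [entH_eq_sum_negMulLog, outDist]
  have := Real.continuous_negMulLog
  fun_prop

lemma exists_pos_isPMF_exp_neg_mul_le {o : Y → ℝ} (ho : IsPMF o) {ε : ℝ} (hε : 0 < ε) :
    ∃ q, IsPMF q ∧ (∀ y, 0 < q y) ∧ ∀ y, Real.exp (-ε) * o y ≤ q y := by
  have hlt : Real.exp (-ε) < 1 := Real.exp_lt_one_iff.2 (neg_lt_zero.2 hε)
  have hne : (Finset.univ : Finset Y).Nonempty :=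
    nonempty_of_sum_ne_zero (ho.2.trans_ne one_ne_zero)
  have hcard : (0 : ℝ) < Fintype.card Y := by exact_mod_cast hne.card_pos
  have hδ : 0 < (1 - Real.exp (-ε)) / Fintype.card Y := div_pos (by linarith) hcard
  have hmix (y : Y) : 0 ≤ Real.exp (-ε) * o y := mul_nonneg (Real.exp_pos _).le (ho.1 y)
  refine ⟨fun y => Real.exp (-ε) * o y + (1 - Real.exp (-ε)) / Fintype.card Y,
    ⟨fun y => (add_pos_of_nonneg_of_pos (hmix y) hδ).le, ?_⟩,
    fun y => add_pos_of_nonneg_of_pos (hmix y) hδ, fun y => le_add_of_nonneg_right hδ.le⟩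
  rw [sum_add_distrib, ← mul_sum, ho.2]
  simp [field]

lemma exists_pos_isPMF_sum_log_div_le (hP : IsPMF P) (hW : IsChannel W) {ε : ℝ} (hε : 0 < ε) :
    ∃ q, IsPMF q ∧ (∀ y, 0 < q y) ∧
      ∑ x, P x * ∑ y, W x y * Real.log (W x y / q y) ≤ mutInf P W + ε := by
  obtain ⟨q, hq, hqpos, hoq⟩ := exists_pos_isPMF_exp_neg_mul_le (isPMF_outDist hP hW) hε
  have term (x : X) (y : Y) : P x * (W x y * Real.log (W x y / q y)) ≤
      (if P x * W x y = 0 then 0 else P x * W x y * Real.log (W x y / outDist P W y)) +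
        ε * (P x * W x y) := by
    split_ifs with h
    · rw [← mul_assoc, h]
      simp
    have hPW : 0 < P x * W x y := (mul_nonneg (hP.1 x) (hW.1 x y)).lt_of_ne' h
    have ho : 0 < outDist P W y := hPW.trans_le (mul_le_outDist hP.1 hW.1 x y)
    have hWxy : W x y ≠ 0 := right_ne_zero_of_mul h
    have hlog := Real.log_le_log (by positivity) (hoq y)
    rw [Real.log_mul (Real.exp_ne_zero _) ho.ne', Real.log_exp] at hlog
    rw [← mul_assoc, Real.log_div hWxy (hqpos y).ne', Real.log_div hWxy ho.ne']
    nlinarith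
  refine ⟨q, hq, hqpos, ?_⟩
  calc ∑ x, P x * ∑ y, W x y * Real.log (W x y / q y)
      ≤ ∑ x, ∑ y, ((if P x * W x y = 0 then 0
          else P x * W x y * Real.log (W x y / outDist P W y)) + ε * (P x * W x y)) := by
        simp only [mul_sum]
        exact sum_le_sum fun x _ => sum_le_sum fun y _ => term x y
    _ = mutInf P W + ε := by
        simp only [sum_add_distrib, ← mul_sum, hW.2, mul_one, hP.2]
        rfl

end MutualInformation

section JointChannel

/-- The joint law `P(x) U(y|x)` of the input and the output of the channel `U`. -/
def jointDist {X Y : Type*} (P : X → ℝ) (U : X → Y → ℝ) (a : X × Y) : ℝ := P a.1 * U a.1 a.2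

/-- The noiseless channel revealing the second coordinate of its input: it turns
Terminal `𝒴` into the receiver of a channel with input `X × Y`. -/
def receiveY (X Y : Type*) (a : X × Y) (y : Y) : ℝ := if a.2 = y then 1 else 0

/-- The channel `V` is a conditional law of `Z` given `(X, Y)` for the broadcast channel `W`;
it turns Terminal `𝒵` into the receiver of a channel with input `X × Y`. -/
def IsDisintegration {X Y Z : Type*} [Fintype Z] (W : X → Y → Z → ℝ) (V : X × Y → Z → ℝ) : Prop :=
  IsChannel V ∧ ∀ x y z, W x y z = margY W x y * V (x, y) z

variable {X Y Z : Type*}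

section Basic

variable {P : X → ℝ} {U : X → Y → ℝ}

lemma jointDist_nonneg (hP : ∀ x, 0 ≤ P x) (hU : ∀ x y, 0 ≤ U x y) (a : X × Y) :
    0 ≤ jointDist P U a :=
  mul_nonneg (hP _) (hU _ _)

variable [Fintype X] [Fintype Y]

lemma sum_jointDist_mul (P : X → ℝ) (U : X → Y → ℝ) (f : X × Y → ℝ) :
    ∑ a, jointDist P U a * f a = ∑ x, P x * ∑ y, U x y * f (x, y) := by
  simp only [jointDist, Fintype.sum_prod_type, mul_sum, mul_assoc]

lemma isPMF_jointDist (hP : IsPMF P) (hU : IsChannel U) : IsPMF (jointDist P U) := by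
  refine ⟨jointDist_nonneg hP.1 hU.1, ?_⟩
  simp only [jointDist, Fintype.sum_prod_type, ← mul_sum, hU.2, mul_one, hP.2]

omit [Fintype X] in
lemma isChannel_receiveY : IsChannel (receiveY X Y) :=
  ⟨fun a y => by unfold receiveY; positivity, fun a => by simp [receiveY]⟩

lemma mutInf_receiveY (hP : ∀ x, 0 ≤ P x) (hU : ∀ x y, 0 ≤ U x y) :
    mutInf (jointDist P U) (receiveY X Y) = entH (outDist P U) := by
  have hout : outDist (jointDist P U) (receiveY X Y) = outDist P U := by
    funext y
    simp [outDist, jointDist, receiveY, Fintype.sum_prod_type]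
  rw [mutInf_eq_sum_add_entH (jointDist_nonneg hP hU) isChannel_receiveY.1, hout]
  simp [receiveY]

lemma continuousOn_mutInf_jointDist {B : Type*} [Fintype B] {V : X × Y → B → ℝ}
    (hU : ∀ x y, 0 ≤ U x y) (hV : ∀ a b, 0 ≤ V a b) :
    ContinuousOn (fun P => mutInf (jointDist P U) V) {P | ∀ x, 0 ≤ P x} := by
  refine (continuousOn_mutInf hV).comp (Continuous.continuousOn ?_)
    fun P hP => jointDist_nonneg hP hU
  unfold jointDist
  fun_prop

end Basic

variable {W : X → Y → Z → ℝ} {V : X × Y → Z → ℝ}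

lemma isChannel_margY [Fintype Y] [Fintype Z] (hW : IsBC W) : IsChannel (margY W) :=
  ⟨fun x y => sum_nonneg fun z _ => hW.1 x y z, hW.2⟩

lemma isChannel_margZ [Fintype Y] [Fintype Z] (hW : IsBC W) : IsChannel (margZ W) :=
  ⟨fun x z => sum_nonneg fun y _ => hW.1 x y z, fun x => by
    simp only [margZ]
    rw [sum_comm, hW.2]⟩

lemma exists_isDisintegration [Fintype Y] [Fintype Z] (hW : IsBC W) :
    ∃ V, IsDisintegration W V := by
  have hzero (x : X) (y : Y) (z : Z) (h : margY W x y = 0) : W x y z = 0 :=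
    (sum_eq_zero_iff_of_nonneg fun z _ => hW.1 x y z).1 h z (mem_univ z)
  refine ⟨fun a z => if margY W a.1 a.2 = 0 then margZ W a.1 z
    else W a.1 a.2 z / margY W a.1 a.2, ⟨fun a z => ?_, fun a => ?_⟩, fun x y z => ?_⟩
  · have := (isChannel_margY hW).1 a.1 a.2
    have := (isChannel_margZ hW).1 a.1 z
    have := hW.1 a.1 a.2 z
    positivity
  · by_cases h : margY W a.1 a.2 = 0
    · simp only [h, if_true, (isChannel_margZ hW).2]
    · simp only [h, if_false, ← sum_div]
      exact div_self h
  · by_cases h : margY W x y = 0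
    · simp [h, hzero]
    · simp [h, mul_div_cancel₀]

lemma IsDisintegration.sum_margY_mul [Fintype Y] [Fintype Z] (hV : IsDisintegration W V) (x : X)
    (z : Z) : ∑ y, margY W x y * V (x, y) z = margZ W x z := by
  simp only [margZ, hV.2]

lemma IsDisintegration.mutInf_eq [Fintype X] [Fintype Y] [Fintype Z] (hV : IsDisintegration W V)
    (P : X → ℝ) : mutInf (jointDist P (margY W)) V = mutInfXY_Z P W := by
  have hjoint (x : X) (y : Y) (z : Z) :
      jointDist P (margY W) (x, y) * V (x, y) z = P x * W x y z := by
    rw [jointDist, mul_assoc, ← hV.2]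
  simp only [mutInf, mutInfXY_Z, Fintype.sum_prod_type, hjoint]
  refine sum_congr rfl fun x _ => sum_congr rfl fun y _ => sum_congr rfl fun z _ => ?_
  split_ifs with h
  · rfl
  · have hne : P x * margY W x y ≠ 0 := fun h0 => h <| by rw [hV.2, ← mul_assoc, h0, zero_mul]
    rw [← mul_div_mul_left (V (x, y) z) _ hne, mul_assoc (P x) (margY W x y) (V (x, y) z), ← hV.2]

end JointChannel

section Words

variable {A B : Type*} {V : A → B → ℝ} {n : ℕ}

lemma sum_prod_eq_one [Fintype B] {q : B → ℝ} (hq : ∑ b, q b = 1) (n : ℕ) :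
    ∑ b : Fin n → B, ∏ i, q (b i) = 1 := by
  rw [← Fintype.sum_pow, hq, one_pow]

lemma isChannel_Wn [Fintype B] (hV : IsChannel V) (n : ℕ) : IsChannel (Wn V n) := by
  refine ⟨fun a b => prod_nonneg fun i _ => hV.1 _ _, fun a => ?_⟩
  simp only [Wn, ← Fintype.piFinset_univ]
  rw [sum_prod_piFinset univ fun i b => V (a i) b]
  simp only [hV.2, prod_const_one]

lemma Wn_le_exp_mul_prod (hV : ∀ a b, 0 ≤ V a b) {q : B → ℝ} (hq : ∀ b, 0 < q b) {r : ℝ}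
    {a : Fin n → A} {b : Fin n → B} (h : ∑ i, Real.log (V (a i) (b i) / q (b i)) ≤ r) :
    Wn V n a b ≤ Real.exp r * ∏ i, q (b i) := by
  by_cases hzero : ∃ i, V (a i) (b i) = 0
  · obtain ⟨i, hi⟩ := hzero
    rw [Wn, prod_eq_zero (mem_univ i) hi]
    exact mul_nonneg (Real.exp_pos r).le (prod_nonneg fun i _ => (hq _).le)
  · push Not at hzero
    have hratio (i : Fin n) : 0 < V (a i) (b i) / q (b i) :=
      div_pos ((hV _ _).lt_of_ne' (hzero i)) (hq _)
    calc Wn V n a b = Real.exp (∑ i, Real.log (V (a i) (b i) / q (b i))) * ∏ i, q (b i) := by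
          simp only [Real.exp_sum, Real.exp_log (hratio _), ← prod_mul_distrib,
            div_mul_cancel₀ _ (hq _).ne']
          rfl
      _ ≤ Real.exp r * ∏ i, q (b i) :=
          mul_le_mul_of_nonneg_right (Real.exp_le_exp.2 h) (prod_nonneg fun i _ => (hq _).le)

lemma sum_arrow_prod [Fintype A] [Fintype B] (F : (Fin n → A) → (Fin n → B) → ℝ) :
    ∑ a : Fin n → A × B, F (fun i => (a i).1) (fun i => (a i).2) = ∑ x, ∑ y, F x y := by
  rw [← Fintype.sum_prod_type',
    ← (Equiv.arrowProdEquivProdArrow (Fin n) (fun _ => A) (fun _ => B)).sum_comp]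
  rfl

end Words

section SequentialLaw

/-- The law on `Ω ^ n` generated by the history-dependent kernels `κ i`. -/
def seqLaw {Ω : Type*} (κ : (i : ℕ) → (Fin i → Ω) → Ω → ℝ) (n : ℕ) (ω : Fin n → Ω) : ℝ :=
  ∏ i : Fin n, κ i.1 (fun j => ω ⟨j.1, j.2.trans i.2⟩) (ω i)

variable {Ω : Type*} {κ : (i : ℕ) → (Fin i → Ω) → Ω → ℝ} {n : ℕ}

lemma seqLaw_snoc (κ : (i : ℕ) → (Fin i → Ω) → Ω → ℝ) (ω : Fin n → Ω) (a : Ω) :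
    seqLaw κ (n + 1) (Fin.snoc (α := fun _ => Ω) ω a) = seqLaw κ n ω * κ n ω a := by
  have hprefix (i : ℕ) (hi : i ≤ n) :
      (fun j : Fin i => Fin.snoc (α := fun _ => Ω) ω a ⟨j.1, by omega⟩) =
        fun j => ω ⟨j.1, by omega⟩ :=
    funext fun j => Fin.snoc_castSucc (α := fun _ => Ω) a ω ⟨j.1, by omega⟩
  simp only [seqLaw, Fin.prod_univ_castSucc, Fin.snoc_castSucc, Fin.snoc_last]
  refine congrArg₂ _ (prod_congr rfl fun i _ => ?_) ?_
  · exact congrArg (κ i.1 · (ω i)) (hprefix i.1 i.2.le)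
  · exact congrArg (κ n · a) (hprefix n le_rfl)

variable [Fintype Ω]

lemma sum_snoc (F : (Fin (n + 1) → Ω) → ℝ) :
    ∑ ω, F ω = ∑ ω : Fin n → Ω, ∑ a, F (Fin.snoc (α := fun _ => Ω) ω a) := by
  rw [← (Fin.snocEquiv fun _ : Fin (n + 1) => Ω).sum_comp, Fintype.sum_prod_type, sum_comm]
  rfl

lemma sum_seqLaw_mul_prod {g : Fin n → Ω → ℝ} {c : Fin n → ℝ}
    (h : ∀ (i : Fin n) (s : Fin i.1 → Ω), ∑ a, κ i.1 s a * g i a = c i) :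
    ∑ ω, seqLaw κ n ω * ∏ i, g i (ω i) = ∏ i, c i := by
  induction n with
  | zero => simp [seqLaw]
  | succ n ih =>
    rw [sum_snoc, Fin.prod_univ_castSucc, ← ih fun i s => h i.castSucc s, sum_mul]
    refine sum_congr rfl fun ω _ => ?_
    rw [← h (Fin.last n) ω, mul_sum]
    refine sum_congr rfl fun a _ => ?_
    rw [seqLaw_snoc, Fin.prod_univ_castSucc]
    simp only [Fin.snoc_castSucc, Fin.snoc_last, Fin.val_last]
    ring

lemma isPMF_seqLaw (h : ∀ i < n, ∀ s, IsPMF (κ i s)) : IsPMF (seqLaw κ n) := by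
  refine ⟨fun ω => prod_nonneg fun i _ => (h i.1 i.2 _).1 _, ?_⟩
  simpa using sum_seqLaw_mul_prod (κ := κ) (n := n) (g := 1) (c := 1)
    fun i s => by simpa using (h i.1 i.2 s).2

lemma sum_seqLaw_snoc_mul_sq {g : Ω → ℝ} {ω : Fin n → Ω} (h1 : ∑ a, κ n ω a = 1)
    (hg : ∑ a, κ n ω a * g a = 0) :
    ∑ a, seqLaw κ (n + 1) (Fin.snoc (α := fun _ => Ω) ω a) *
        (∑ i, g (Fin.snoc (α := fun _ => Ω) ω a i)) ^ 2 =
      seqLaw κ n ω * (∑ i, g (ω i)) ^ 2 + seqLaw κ n ω * ∑ a, κ n ω a * g a ^ 2 := by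
  set S := ∑ i, g (ω i) with hS
  have hexpand (a : Ω) : seqLaw κ (n + 1) (Fin.snoc (α := fun _ => Ω) ω a) *
        (∑ i, g (Fin.snoc (α := fun _ => Ω) ω a i)) ^ 2 =
      seqLaw κ n ω * S ^ 2 * κ n ω a + 2 * seqLaw κ n ω * S * (κ n ω a * g a) +
        seqLaw κ n ω * (κ n ω a * g a ^ 2) := by
    simp only [seqLaw_snoc, Fin.sum_univ_castSucc, Fin.snoc_castSucc, Fin.snoc_last, ← hS]
    ring
  simp only [hexpand, sum_add_distrib, ← mul_sum, h1, hg]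
  ring

-- The increments `g (ω i)` are martingale differences, so the cross terms vanish.
lemma sum_seqLaw_mul_sq_le (h : ∀ i < n, ∀ s, IsPMF (κ i s)) {g : Ω → ℝ} {v : ℝ}
    (hg : ∀ i < n, ∀ s, ∑ a, κ i s a * g a = 0)
    (hv : ∀ i < n, ∀ s, ∑ a, κ i s a * g a ^ 2 ≤ v) :
    ∑ ω, seqLaw κ n ω * (∑ i, g (ω i)) ^ 2 ≤ n * v := by
  induction n with
  | zero => simp
  | succ n ih =>
    have hn := n.lt_succ_self
    have hlaw := isPMF_seqLaw (n := n) fun i hi => h i (hi.trans hn)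
    calc ∑ ω, seqLaw κ (n + 1) ω * (∑ i, g (ω i)) ^ 2
        = ∑ ω, seqLaw κ n ω * (∑ i, g (ω i)) ^ 2 +
            ∑ ω, seqLaw κ n ω * ∑ a, κ n ω a * g a ^ 2 := by
          rw [sum_snoc, ← sum_add_distrib]
          exact sum_congr rfl fun ω _ => sum_seqLaw_snoc_mul_sq (h n hn ω).2 (hg n hn ω)
      _ ≤ n * v + ∑ ω, seqLaw κ n ω * v :=
          add_le_add (ih (fun i hi => h i (hi.trans hn)) (fun i hi => hg i (hi.trans hn))
              fun i hi => hv i (hi.trans hn))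
            (sum_le_sum fun ω _ => mul_le_mul_of_nonneg_left (hv n hn ω) (hlaw.1 ω))
      _ = (n + 1 : ℕ) * v := by
          rw [← sum_mul, hlaw.2]
          push_cast
          ring

lemma IsPMF.le_one {p : Ω → ℝ} (hp : IsPMF p) (a : Ω) : p a ≤ 1 :=
  (single_le_sum (fun a _ => hp.1 a) (mem_univ a)).trans_eq hp.2

lemma sum_seqLaw_mul_Wn_sq_le {B : Type*} [Fintype B] {V : Ω → B → ℝ}
    (hκ : ∀ i < n, ∀ s, IsPMF (κ i s)) (hV : IsChannel V) {g : Ω → B → ℝ}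
    (hg : ∀ i < n, ∀ s, ∑ a, κ i s a * ∑ b, V a b * g a b = 0) :
    ∑ a, seqLaw κ n a * ∑ b, Wn V n a b * (∑ i, g (a i) (b i)) ^ 2 ≤
      n * ∑ a, ∑ b, g a b ^ 2 := by
  set κV : (i : ℕ) → (Fin i → Ω × B) → Ω × B → ℝ :=
    fun i s => jointDist (κ i fun j => (s j).1) V with hκV
  have hpmf : ∀ i < n, ∀ s, IsPMF (κV i s) := fun i hi s => isPMF_jointDist (hκ i hi _) hV
  have hlaw (ω : Fin n → Ω × B) :
      seqLaw κV n ω = seqLaw κ n (fun i => (ω i).1) * Wn V n (fun i => (ω i).1) fun i => (ω i).2 :=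
    prod_mul_distrib
  calc ∑ a, seqLaw κ n a * ∑ b, Wn V n a b * (∑ i, g (a i) (b i)) ^ 2
      = ∑ ω : Fin n → Ω × B, seqLaw κV n ω * (∑ i, g (ω i).1 (ω i).2) ^ 2 := by
        simp only [hlaw, mul_sum, ← mul_assoc]
        exact (sum_arrow_prod fun (a : Fin n → Ω) (b : Fin n → B) =>
          seqLaw κ n a * Wn V n a b * (∑ i, g (a i) (b i)) ^ 2).symm
    _ ≤ n * ∑ ω : Ω × B, g ω.1 ω.2 ^ 2 := by
        refine sum_seqLaw_mul_sq_le (g := fun ω : Ω × B => g ω.1 ω.2) hpmf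
          (fun i hi s => ?_) fun i hi s => ?_
        · simpa only [hκV, jointDist, Fintype.sum_prod_type, mul_assoc, ← mul_sum]
            using hg i hi fun j => (s j).1
        · exact sum_le_sum fun ω _ =>
            mul_le_of_le_one_left (sq_nonneg _) ((hpmf i hi s).le_one ω)
    _ = n * ∑ a, ∑ b, g a b ^ 2 := by rw [Fintype.sum_prod_type]

end SequentialLaw

section SoftCovering

variable {Ω T : Type*} [Fintype Ω]

lemma IsPMF.exists_le_of_sum_mul_le {p : Ω → ℝ} (hp : IsPMF p) {f : Ω → ℝ} {c : ℝ}
    (h : ∑ a, p a * f a ≤ c) : ∃ a, f a ≤ c := by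
  by_contra! hlt
  obtain ⟨a, -, ha⟩ : ∃ a ∈ univ, p a ≠ 0 :=
    exists_ne_zero_of_sum_ne_zero (hp.2.trans_ne one_ne_zero)
  have : ∑ a, p a * c < ∑ a, p a * f a :=
    sum_lt_sum (fun a _ => mul_le_mul_of_nonneg_left (hlt a).le (hp.1 a))
      ⟨a, mem_univ a, mul_lt_mul_of_pos_left (hlt a) ((hp.1 a).lt_of_ne' ha)⟩
  rw [← sum_mul, hp.2, one_mul] at this
  linarith

lemma IsPMF.sum_mul_abs_le_sqrt {p : Ω → ℝ} (hp : IsPMF p) (f : Ω → ℝ) :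
    ∑ a, p a * |f a| ≤ √(∑ a, p a * f a ^ 2) := by
  refine Real.le_sqrt_of_sq_le ?_
  simpa only [sq_abs] using Real.pow_arith_mean_le_arith_mean_pow univ p (fun a => |f a|)
    (fun a _ => hp.1 a) hp.2 (fun a _ => abs_nonneg _) 2

lemma IsPMF.sum_prod_mul_sq_sub_mean_le {p : Ω → ℝ} (hp : IsPMF p) (f : Ω → ℝ) {M : ℕ}
    (hM : 0 < M) :
    ∑ u : Fin M → Ω, (∏ j, p (u j)) * ((M : ℝ)⁻¹ * ∑ j, f (u j) - ∑ a, p a * f a) ^ 2 ≤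
      (∑ a, p a * f a ^ 2) / M := by
  set μ := ∑ a, p a * f a with hμ
  have hmean : ∑ a, p a * (f a - μ) = 0 := by
    simp only [mul_sub, sum_sub_distrib, ← sum_mul, hp.2, one_mul, hμ, sub_self]
  have hvar : ∑ a, p a * (f a - μ) ^ 2 ≤ ∑ a, p a * f a ^ 2 := by
    have hexpand (a : Ω) : p a * f a ^ 2 =
        p a * (f a - μ) ^ 2 + 2 * μ * (p a * (f a - μ)) + μ ^ 2 * p a := by ring
    simp only [hexpand, sum_add_distrib, ← mul_sum, hmean, hp.2]
    nlinarith [sq_nonneg μ]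
  have hscale (u : Fin M → Ω) :
      (M : ℝ)⁻¹ * ∑ j, f (u j) - μ = (M : ℝ)⁻¹ * ∑ j, (f (u j) - μ) := by
    simp [sum_sub_distrib, mul_sub, hM.ne']
  calc ∑ u : Fin M → Ω, (∏ j, p (u j)) * ((M : ℝ)⁻¹ * ∑ j, f (u j) - μ) ^ 2
      = ((M : ℝ)⁻¹) ^ 2 * ∑ u, seqLaw (fun _ _ => p) M u * (∑ j, (f (u j) - μ)) ^ 2 := by
        rw [mul_sum]
        refine sum_congr rfl fun u _ => ?_
        rw [hscale, seqLaw]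
        ring
    _ ≤ ((M : ℝ)⁻¹) ^ 2 * (M * ∑ a, p a * f a ^ 2) := by
        exact mul_le_mul_of_nonneg_left (sum_seqLaw_mul_sq_le (κ := fun _ _ => p)
          (g := fun a => f a - μ) (fun _ _ _ => hp) (fun _ _ _ => hmean) fun _ _ _ => hvar)
          (sq_nonneg _)
    _ = (∑ a, p a * f a ^ 2) / M := by field_simp

lemma sum_outDist (p : Ω → ℝ) (K : Ω → T → ℝ) (S : Finset T) :
    ∑ t ∈ S, outDist p K t = ∑ a, p a * ∑ t ∈ S, K a t := by
  simp only [outDist, mul_sum]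
  exact sum_comm

variable [Fintype T]

/-- A sub-stochastic kernel with density at most `Λ` with respect to the law `q`. -/
structure IsBoundedKernel (K : Ω → T → ℝ) (q : T → ℝ) (Λ : ℝ) : Prop where
  nonneg : ∀ a t, 0 ≤ K a t
  sum_le_one : ∀ a, ∑ t, K a t ≤ 1
  le_mul : ∀ a t, K a t ≤ Λ * q t

variable {K : Ω → T → ℝ} {q : T → ℝ} {Λ : ℝ} {p : Ω → ℝ}

lemma IsBoundedKernel.sum_sqrt_mul_outDist_le_one (hK : IsBoundedKernel K q Λ) (hq : IsPMF q)
    (hp : IsPMF p) : ∑ t, √(q t * outDist p K t) ≤ 1 := by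
  have hout (t : T) : 0 ≤ outDist p K t := sum_nonneg fun a _ => mul_nonneg (hp.1 a) (hK.nonneg a t)
  have hmass : ∑ t, outDist p K t ≤ 1 := by
    rw [sum_outDist, ← hp.2]
    exact sum_le_sum fun a _ => mul_le_of_le_one_right (hp.1 a) (hK.sum_le_one a)
  simp only [Real.sqrt_mul (hq.1 _)]
  refine (Real.sum_sqrt_mul_sqrt_le _ hq.1 hout).trans ?_
  rw [hq.2, Real.sqrt_one, one_mul]
  exact Real.sqrt_le_one.2 hmass

lemma IsBoundedKernel.exists_sample_sum_abs_le (hK : IsBoundedKernel K q Λ) (hq : IsPMF q)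
    (hp : IsPMF p) {M : ℕ} (hM : 0 < M) :
    ∃ u : Fin M → Ω, ∑ t, |(M : ℝ)⁻¹ * ∑ j, K (u j) t - outDist p K t| ≤ √(Λ / M) := by
  have hiid : IsPMF fun u : Fin M → Ω => ∏ j, p (u j) :=
    isPMF_seqLaw (κ := fun _ _ => p) fun _ _ _ => hp
  have hsecond (t : T) : ∑ a, p a * K a t ^ 2 ≤ Λ * (q t * outDist p K t) := by
    simp only [outDist, mul_sum]
    refine sum_le_sum fun a _ => ?_
    nlinarith [mul_le_mul_of_nonneg_left (hK.le_mul a t) (mul_nonneg (hp.1 a) (hK.nonneg a t))]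
  have hpoint (t : T) : ∑ u : Fin M → Ω,
      (∏ j, p (u j)) * |(M : ℝ)⁻¹ * ∑ j, K (u j) t - outDist p K t| ≤
        √(Λ / M) * √(q t * outDist p K t) := by
    have hnn : 0 ≤ q t * outDist p K t :=
      mul_nonneg (hq.1 t) (sum_nonneg fun a _ => mul_nonneg (hp.1 a) (hK.nonneg a t))
    rw [← Real.sqrt_mul' _ hnn, div_mul_eq_mul_div]
    exact (hiid.sum_mul_abs_le_sqrt _).trans <| Real.sqrt_le_sqrt <|
      (hp.sum_prod_mul_sq_sub_mean_le (fun a => K a t) hM).trans <| by gcongr; exact hsecond t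
  refine hiid.exists_le_of_sum_mul_le ?_
  simp only [mul_sum _ fun _ => |_|]
  rw [sum_comm]
  refine (sum_le_sum fun t _ => hpoint t).trans ?_
  rw [← mul_sum]
  exact mul_le_of_le_one_right (Real.sqrt_nonneg _) (hK.sum_sqrt_mul_outDist_le_one hq hp)

-- Two messages approximated by the same sample would have nearly equal output laws, which their
-- decision sets forbid; so the number of samples bounds the number of messages.
lemma IsBoundedKernel.card_le_pow [DecidableEq T] (hK : IsBoundedKernel K q Λ) (hq : IsPMF q)
    {ι : Type*} {p : ι → Ω → ℝ} (hp : ∀ m, IsPMF (p m)) {D : ι → Finset T} {l1 l2 : ℝ}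
    (h1 : ∀ m, ∑ t ∈ (D m)ᶜ, outDist (p m) K t ≤ l1)
    (h2 : ∀ m m', m ≠ m' → ∑ t ∈ D m', outDist (p m) K t ≤ l2) {M : ℕ} (hM : 0 < M)
    {s : Finset ι}
    (hs : ∀ m ∈ s, l1 + l2 + 2 * √(Λ / M) < ∑ t, outDist (p m) K t) :
    #s ≤ Fintype.card Ω ^ M := by
  choose u hu using fun m => hK.exists_sample_sum_abs_le hq (hp m) hM
  have hcard : #(univ : Finset (Fin M → Ω)) = Fintype.card Ω ^ M := by simp
  rw [← hcard]
  refine card_le_card_of_injOn u (fun m _ => mem_univ _) fun m hm m' _ hsame => ?_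
  by_contra hne
  have hclose : ∑ t ∈ D m, (outDist (p m) K t - outDist (p m') K t) ≤ 2 * √(Λ / M) := by
    have hm' := hu m'
    rw [← hsame] at hm'
    set S := fun t => (M : ℝ)⁻¹ * ∑ j, K (u m j) t
    calc ∑ t ∈ D m, (outDist (p m) K t - outDist (p m') K t)
        ≤ ∑ t ∈ D m, (|S t - outDist (p m) K t| + |S t - outDist (p m') K t|) :=
          sum_le_sum fun t _ => by
            linarith [neg_abs_le (S t - outDist (p m) K t), le_abs_self (S t - outDist (p m') K t)]
      _ ≤ ∑ t, (|S t - outDist (p m) K t| + |S t - outDist (p m') K t|) :=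
          sum_le_univ_sum_of_nonneg fun t => by positivity
      _ ≤ 2 * √(Λ / M) := by
          rw [sum_add_distrib, two_mul]
          exact add_le_add (hu m) hm'
  rw [sum_sub_distrib] at hclose
  linarith [h1 m, h2 m' m (Ne.symm hne), hs m hm, sum_add_sum_compl (D m) (outDist (p m) K)]

end SoftCovering

section IdentificationConverse

/-- The output words whose information density `∑ log (V(bᵢ|aᵢ) / q(bᵢ))` relative to the
reference output law `q` is at most `r`. -/
def typicalOutputs {A B : Type*} [Fintype B] {n : ℕ} (V : A → B → ℝ) (q : B → ℝ) (r : ℝ)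
    (a : Fin n → A) : Finset (Fin n → B) :=
  {b | ∑ i, Real.log (V (a i) (b i) / q (b i)) ≤ r}

variable {A B : Type*} [Fintype A] [Fintype B] {V : A → B → ℝ} {n : ℕ}

omit [Fintype A] in
lemma isBoundedKernel_typicalOutputs (hV : IsChannel V) {q : B → ℝ} (hq : ∀ b, 0 < q b) (r : ℝ) :
    IsBoundedKernel (fun (a : Fin n → A) b => if b ∈ typicalOutputs V q r a then Wn V n a b else 0)
      (fun b => ∏ i, q (b i)) (Real.exp r) where
  nonneg a b := by
    have := (isChannel_Wn hV n).1 a b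
    positivity
  sum_le_one a := by
    rw [← (isChannel_Wn hV n).2 a, sum_ite_mem, univ_inter]
    exact sum_le_univ_sum_of_nonneg ((isChannel_Wn hV n).1 a)
  le_mul a b := by
    split_ifs with hb
    · exact Wn_le_exp_mul_prod hV.1 hq (mem_filter.1 hb).2
    · exact mul_nonneg (Real.exp_pos r).le (prod_nonneg fun i _ => (hq _).le)

variable {ι : Type*} {p : ι → (Fin n → A) → ℝ} {D : ι → Finset (Fin n → B)} {l1 l2 : ℝ}

lemma IDCodeErr.card_le_pow (h : IDCodeErr n V p D l1 l2) (hV : IsChannel V)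
    (hp : ∀ m, IsPMF (p m)) {q : B → ℝ} (hq : IsPMF q) (hqpos : ∀ b, 0 < q b) {r : ℝ} {M : ℕ}
    (hM : 0 < M) {s : Finset ι}
    (hs : ∀ m ∈ s, l1 + l2 + 2 * √(Real.exp r / M) <
      ∑ a, p m a * ∑ b ∈ typicalOutputs V q r a, Wn V n a b) :
    #s ≤ Fintype.card A ^ (n * M) := by
  have hK := isBoundedKernel_typicalOutputs (n := n) hV hqpos r
  have hqn : IsPMF fun b : Fin n → B => ∏ i, q (b i) :=
    ⟨fun b => prod_nonneg fun i _ => hq.1 _, sum_prod_eq_one hq.2 n⟩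
  have htrunc (m : ι) (S : Finset (Fin n → B)) :
      ∑ b ∈ S, outDist (p m)
          (fun a b => if b ∈ typicalOutputs V q r a then Wn V n a b else 0) b ≤
        ∑ a, p m a * ∑ b ∈ S, Wn V n a b := by
    rw [sum_outDist]
    refine sum_le_sum fun a _ => mul_le_mul_of_nonneg_left (sum_le_sum fun b _ => ?_) ((hp m).1 a)
    split_ifs
    exacts [le_rfl, (isChannel_Wn hV n).1 a b]
  have hcard : Fintype.card A ^ (n * M) = Fintype.card (Fin n → A) ^ M := by simp [pow_mul]
  rw [hcard]
  refine hK.card_le_pow hqn hp (fun m => (htrunc m _).trans (h.1 m))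
    (fun m m' hne => (htrunc m _).trans (h.2 m m' hne)) hM fun m hm => (hs m hm).trans_eq ?_
  simp only [sum_outDist, sum_ite_mem, univ_inter]

lemma IDCodeErr.eq_of_outDist_eq (h : IDCodeErr n V p D l1 l2) (hV : IsChannel V)
    (hp : ∀ m, IsPMF (p m)) (hl : l1 + l2 < 1) {o : (Fin n → B) → ℝ}
    (ho : ∀ m, outDist (p m) (Wn V n) = o) (m m' : ι) : m = m' := by
  by_contra hne
  have hmiss : ∑ b ∈ (D m)ᶜ, o b ≤ l1 := by
    rw [← ho m, sum_outDist]
    exact h.1 m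
  have hfalse : ∑ b ∈ D m, o b ≤ l2 := by
    rw [← ho m', sum_outDist]
    exact h.2 m' m (Ne.symm hne)
  have htotal : ∑ b, o b = 1 := ho m ▸ (isPMF_outDist (hp m) (isChannel_Wn hV n)).2
  linarith [sum_add_sum_compl (D m) o]

end IdentificationConverse

section FeedbackInputs

variable {X Y B : Type*}

/-- The law of the word `(𝐱, 𝐲)` generated by the feedback encoder `Q` over the channel `U`
to the terminal that feeds back. -/
def pairLaw (n : ℕ) (U : X → Y → ℝ) (Q : (i : ℕ) → (Fin i → X) → (Fin i → Y) → X → ℝ) :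
    (Fin n → X × Y) → ℝ :=
  seqLaw (fun i s => jointDist (Q i (fun j => (s j).1) fun j => (s j).2) U) n

variable [Fintype X] [Fintype Y] [Fintype B] {n : ℕ} {U : X → Y → ℝ} {V : X × Y → B → ℝ}
  {p : (Fin n → X × Y) → ℝ}

/-- The laws of `(𝐱, 𝐲)` that feedback encoders can generate with additional randomization; the
randomization accounts for averaging over the message of the other terminal. -/
def feedbackInputs (n : ℕ) (U : X → Y → ℝ) : Set ((Fin n → X × Y) → ℝ) :=
  convexHull ℝ {p | ∃ Q, IsFBEncoder n Q ∧ pairLaw n U Q = p}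

/-- The average of the laws generated by the encoders `Q j`. -/
def meanPairLaw {k : ℕ} (n : ℕ) (U : X → Y → ℝ)
    (Q : Fin k → (i : ℕ) → (Fin i → X) → (Fin i → Y) → X → ℝ) : (Fin n → X × Y) → ℝ :=
  (k : ℝ)⁻¹ • ∑ j, pairLaw n U (Q j)

omit [Fintype Y] in
lemma meanPairLaw_mem_feedbackInputs {k : ℕ} (hk : 0 < k)
    {Q : Fin k → (i : ℕ) → (Fin i → X) → (Fin i → Y) → X → ℝ} (hQ : ∀ j, IsFBEncoder n (Q j)) :
    meanPairLaw n U Q ∈ feedbackInputs n U := by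
  rw [meanPairLaw, smul_sum]
  exact (convex_convexHull ℝ _).sum_mem (fun _ _ => by positivity) (by simp [hk.ne'])
    fun j _ => subset_convexHull ℝ _ ⟨Q j, hQ j, rfl⟩

lemma sum_meanPairLaw_mul {k : ℕ} (Q : Fin k → (i : ℕ) → (Fin i → X) → (Fin i → Y) → X → ℝ)
    (f : (Fin n → X × Y) → ℝ) :
    ∑ a, meanPairLaw n U Q a * f a = (k : ℝ)⁻¹ * ∑ j, ∑ a, pairLaw n U (Q j) a * f a := by
  simp only [meanPairLaw, Pi.smul_apply, Finset.sum_apply, smul_eq_mul, mul_assoc, sum_mul,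
    ← mul_sum]
  rw [sum_comm]

lemma sum_mul_mem_of_mem_feedbackInputs {C : Set ℝ} (hC : Convex ℝ C) {f : (Fin n → X × Y) → ℝ}
    (h : ∀ Q, IsFBEncoder n Q → ∑ a, pairLaw n U Q a * f a ∈ C) (hp : p ∈ feedbackInputs n U) :
    ∑ a, p a * f a ∈ C := by
  have hlinear : IsLinearMap ℝ fun p : (Fin n → X × Y) → ℝ => ∑ a, p a * f a :=
    ⟨fun p p' => by simp [add_mul, sum_add_distrib], fun c p => by simp [mul_sum, mul_assoc]⟩
  refine convexHull_min ?_ (hC.is_linear_preimage hlinear) hp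
  rintro _ ⟨Q, hQ, rfl⟩
  exact h Q hQ

lemma isPMF_of_mem_feedbackInputs (hU : IsChannel U) (hp : p ∈ feedbackInputs n U) : IsPMF p := by
  refine convexHull_min ?_ (convex_stdSimplex ℝ _) hp
  rintro _ ⟨Q, hQ, rfl⟩
  exact isPMF_seqLaw fun i hi s => isPMF_jointDist (hQ i hi _ _) hU

omit [Fintype B] in
lemma outDist_Wn_eq_prod (hp : p ∈ feedbackInputs n U) {o : B → ℝ}
    (ho : ∀ x b, ∑ y, U x y * V (x, y) b = o b) :
    outDist p (Wn V n) = fun b => ∏ i, o (b i) := by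
  ext b
  refine sum_mul_mem_of_mem_feedbackInputs (convex_singleton _) (fun Q hQ => ?_) hp
  refine sum_seqLaw_mul_prod (g := fun i a => V a (b i)) fun i s => ?_
  rw [sum_jointDist_mul]
  simp only [ho, ← sum_mul, (hQ i.1 i.2 _ _).2, one_mul]

lemma sum_mul_Wn_mul_sq_le (hU : IsChannel U) (hV : IsChannel V) (hp : p ∈ feedbackInputs n U)
    {g : X × Y → B → ℝ} (hg : ∀ x, ∑ y, U x y * ∑ b, V (x, y) b * g (x, y) b = 0) :
    ∑ a, p a * ∑ b, Wn V n a b * (∑ i, g (a i) (b i)) ^ 2 ≤ n * ∑ a, ∑ b, g a b ^ 2 := by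
  refine sum_mul_mem_of_mem_feedbackInputs (convex_Iic _) (fun Q hQ => ?_) hp
  refine sum_seqLaw_mul_Wn_sq_le (fun i hi s => isPMF_jointDist (hQ i hi _ _) hU) hV
    fun i _ s => ?_
  rw [sum_jointDist_mul]
  simp only [hg, mul_zero, sum_const_zero]

end FeedbackInputs

section TerminalCodes

variable {X Y Z : Type*} [Fintype X] [Fintype Y] [Fintype Z] {n : ℕ} {W : X → Y → Z → ℝ}
  {V : X × Y → Z → ℝ} {Q : (i : ℕ) → (Fin i → X) → (Fin i → Y) → X → ℝ}

omit [Fintype X] [Fintype Y] in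
lemma IsDisintegration.fbLaw_eq (hV : IsDisintegration W V) (a : Fin n → X × Y) (z : Fin n → Z) :
    fbLaw n W Q (fun i => (a i).1) (fun i => (a i).2) z =
      pairLaw n (margY W) Q a * Wn V n a z := by
  simp only [fbLaw, pairLaw, seqLaw, Wn, jointDist, hV.2, ← prod_mul_distrib, mul_assoc]

lemma IsDisintegration.sum_fbLaw (hV : IsDisintegration W V) (S : Finset (Fin n → Z)) :
    ∑ x, ∑ y, ∑ z ∈ S, fbLaw n W Q x y z =
      ∑ a, pairLaw n (margY W) Q a * ∑ z ∈ S, Wn V n a z := by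
  rw [← sum_arrow_prod]
  simp only [hV.fbLaw_eq, mul_sum]

omit [Fintype X] [Fintype Y] in
lemma sum_Wn_receiveY (a : Fin n → X × Y) (S : Finset (Fin n → Y)) :
    ∑ y ∈ S, Wn (receiveY X Y) n a y = if (fun i => (a i).2) ∈ S then 1 else 0 := by
  have hWn (y : Fin n → Y) : Wn (receiveY X Y) n a y = if (fun i => (a i).2) = y then 1 else 0 := by
    simp only [Wn, receiveY, prod_ite_zero, prod_const_one, funext_iff, mem_univ, true_imp_iff]
  simp only [hWn, sum_ite_eq]

lemma sum_fbLaw_receiveY (hW : IsBC W) (S : Finset (Fin n → Y)) :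
    ∑ x, ∑ y ∈ S, ∑ z, fbLaw n W Q x y z =
      ∑ a, pairLaw n (margY W) Q a * ∑ y ∈ S, Wn (receiveY X Y) n a y := by
  obtain ⟨V, hV⟩ := exists_isDisintegration hW
  have hrestrict (x : Fin n → X) : ∑ y ∈ S, ∑ z, fbLaw n W Q x y z =
      ∑ y, if y ∈ S then ∑ z, fbLaw n W Q x y z else 0 := by
    rw [sum_ite_mem, univ_inter]
  simp only [hrestrict]
  rw [← sum_arrow_prod]
  simp only [hV.fbLaw_eq, ← mul_sum, (isChannel_Wn hV.1 n).2, sum_Wn_receiveY, mul_ite, mul_one,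
    mul_zero]

variable {kY kZ : ℕ} {Q : Fin kY → Fin kZ → (i : ℕ) → (Fin i → X) → (Fin i → Y) → X → ℝ}
  {DY : Fin kY → Finset (Fin n → Y)} {DZ : Fin kZ → Finset (Fin n → Z)} {l1Y l2Y l1Z l2Z : ℝ}

lemma IsFBIDCode.idCodeErr_fst (h : IsFBIDCode n kY kZ W Q DY DZ l1Y l2Y l1Z l2Z) (hW : IsBC W) :
    IDCodeErr n (receiveY X Y) (fun my => meanPairLaw n (margY W) (Q my)) DY l1Y l2Y := by
  simp only [IDCodeErr, sum_meanPairLaw_mul, ← sum_fbLaw_receiveY hW]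
  exact ⟨h.2.1, h.2.2.1⟩

lemma IsFBIDCode.idCodeErr_snd (h : IsFBIDCode n kY kZ W Q DY DZ l1Y l2Y l1Z l2Z)
    (hV : IsDisintegration W V) :
    IDCodeErr n V (fun mz => meanPairLaw n (margY W) (Q · mz)) DZ l1Z l2Z := by
  simp only [IDCodeErr, sum_meanPairLaw_mul, ← hV.sum_fbLaw]
  exact h.2.2.2

end TerminalCodes

section Types

variable {X Y : Type*} {n : ℕ}

/-- The empirical distribution (type) of a word. -/
def empDist (x : Fin n → X) (a : X) : ℝ :=
  (n : ℝ)⁻¹ * ∑ i, if x i = a then 1 else 0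

/-- The probability that the type of `𝐱` lies in `N`, where `(𝐱, 𝐲)` has law `p`. -/
def typeMass [Fintype X] [Fintype Y] (N : Set (X → ℝ)) (p : (Fin n → X × Y) → ℝ) : ℝ :=
  ∑ a with empDist (fun i => (a i).1) ∈ N, p a

variable [Fintype X]

lemma sum_empDist_mul (x : Fin n → X) (f : X → ℝ) :
    ∑ a, empDist x a * f a = (n : ℝ)⁻¹ * ∑ i, f (x i) := by
  simp_rw [empDist, mul_assoc, ← mul_sum, sum_mul]
  rw [sum_comm]
  simp

lemma empDist_mem_stdSimplex (hn : 0 < n) (x : Fin n → X) : empDist x ∈ stdSimplex ℝ X := by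
  refine ⟨fun a => mul_nonneg (by positivity) (sum_nonneg fun i _ => by positivity), ?_⟩
  simpa [hn.ne'] using sum_empDist_mul x fun _ => 1

end Types

section LocalConverse

variable {X Y B : Type*} [Fintype Y] [Fintype B] {n : ℕ} {U : X → Y → ℝ} {V : X × Y → B → ℝ}

/-- The mean of the information density `log (V(b|x,y) / q(b))` when `x` is sent. -/
def meanInfoDensity (U : X → Y → ℝ) (V : X × Y → B → ℝ) (q : B → ℝ) (x : X) : ℝ :=
  ∑ y, U x y * ∑ b, V (x, y) b * Real.log (V (x, y) b / q b)

lemma sum_mul_infoDensity_sub_mean (hU : IsChannel U) (hV : IsChannel V) (q : B → ℝ) (x : X) :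
    ∑ y, U x y * ∑ b, V (x, y) b *
      (Real.log (V (x, y) b / q b) - meanInfoDensity U V q x) = 0 := by
  simp only [mul_sub, sum_sub_distrib, ← sum_mul, hV.2, one_mul, hU.2]
  exact sub_self _

variable [Fintype X]

lemma one_le_sq_div_of_notMem_typicalOutputs {q : B → ℝ} {c δ : ℝ} (hn : 0 < n) (hδ : 0 < δ)
    {a : Fin n → X × Y} {b : Fin n → B}
    (ha : ∑ x, empDist (fun i => (a i).1) x * meanInfoDensity U V q x < c)
    (hb : b ∉ typicalOutputs V q (n * (c + δ)) a) :
    1 ≤ (∑ i, (Real.log (V (a i) (b i) / q (b i)) - meanInfoDensity U V q (a i).1)) ^ 2 /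
      (n * δ) ^ 2 := by
  rw [sum_empDist_mul, inv_mul_lt_iff₀ (by positivity)] at ha
  simp only [typicalOutputs, mem_filter, mem_univ, true_and, not_le] at hb
  rw [one_le_div₀ (by positivity), sum_sub_distrib]
  exact pow_le_pow_left₀ (by positivity) (by linarith) 2

lemma ite_le_sum_typicalOutputs_add (hV : IsChannel V) (q : B → ℝ) (c : ℝ) {δ : ℝ} (hn : 0 < n)
    (hδ : 0 < δ) (a : Fin n → X × Y) :
    (if ∑ x, empDist (fun i => (a i).1) x * meanInfoDensity U V q x < c then 1 else 0) ≤
      ∑ b ∈ typicalOutputs V q (n * (c + δ)) a, Wn V n a b +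
        (∑ b, Wn V n a b * (∑ i, (Real.log (V (a i) (b i) / q (b i)) -
          meanInfoDensity U V q (a i).1)) ^ 2) / (n * δ) ^ 2 := by
  have hWn := isChannel_Wn hV n
  have hnonneg (b : Fin n → B) (r : ℝ) : 0 ≤ Wn V n a b * r ^ 2 :=
    mul_nonneg (hWn.1 a b) (sq_nonneg r)
  split_ifs with ha
  · rw [← hWn.2 a, ← sum_add_sum_compl (typicalOutputs V q (n * (c + δ)) a), sum_div]
    gcongr
    refine (sum_le_sum fun b hb => ?_).trans
      (sum_le_univ_sum_of_nonneg fun b => div_nonneg (hnonneg b _) (sq_nonneg _))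
    rw [mul_div_assoc]
    exact le_mul_of_one_le_right (hWn.1 a b)
      (one_le_sq_div_of_notMem_typicalOutputs hn hδ ha (mem_compl.1 hb))
  · exact add_nonneg (sum_nonneg fun b _ => hWn.1 a b)
      (div_nonneg (sum_nonneg fun b _ => hnonneg b _) (sq_nonneg _))

lemma exists_typeMass_le (hU : IsChannel U) (hV : IsChannel V) (q : B → ℝ) (c : ℝ) {δ : ℝ}
    (hδ : 0 < δ) :
    ∃ v : ℝ, ∀ n > 0, ∀ p ∈ feedbackInputs n U,
      typeMass {P | ∑ x, P x * meanInfoDensity U V q x < c} p ≤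
        ∑ a, p a * ∑ b ∈ typicalOutputs V q (n * (c + δ)) a, Wn V n a b + v / n := by
  set g : X × Y → B → ℝ := fun a b => Real.log (V a b / q b) - meanInfoDensity U V q a.1
  refine ⟨(∑ a, ∑ b, g a b ^ 2) / δ ^ 2, fun n hn p hp => ?_⟩
  calc typeMass {P | ∑ x, P x * meanInfoDensity U V q x < c} p
      = ∑ a, p a *
          if ∑ x, empDist (fun i => (a i).1) x * meanInfoDensity U V q x < c then 1 else 0 := by
        simp only [typeMass, Set.mem_ofPred_eq, sum_filter, mul_ite, mul_one, mul_zero]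
    _ ≤ ∑ a, p a * (∑ b ∈ typicalOutputs V q (n * (c + δ)) a, Wn V n a b +
          (∑ b, Wn V n a b * (∑ i, g (a i) (b i)) ^ 2) / (n * δ) ^ 2) :=
        sum_le_sum fun a _ => mul_le_mul_of_nonneg_left
          (ite_le_sum_typicalOutputs_add hV q c hn hδ a) ((isPMF_of_mem_feedbackInputs hU hp).1 a)
    _ = ∑ a, p a * ∑ b ∈ typicalOutputs V q (n * (c + δ)) a, Wn V n a b +
          (∑ a, p a * ∑ b, Wn V n a b * (∑ i, g (a i) (b i)) ^ 2) / (n * δ) ^ 2 := by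
        simp only [mul_add, sum_add_distrib, sum_div, mul_div_assoc]
    _ ≤ _ := by
        rw [add_le_add_iff_left, div_le_iff₀ (by positivity)]
        refine (sum_mul_Wn_mul_sq_le hU hV hp (g := g)
          (sum_mul_infoDensity_sub_mean hU hV q)).trans_eq ?_
        field_simp

lemma half_mul_le_card_filter {k : ℕ} {w : ℝ} (hw : 0 ≤ w) {g : Fin k → ℝ} (hg : ∀ m, g m ≤ 1)
    (hk : w * k ≤ ∑ m, g m) : w / 2 * k ≤ #{m | w / 2 ≤ g m} := by
  have hsum : ∑ m, g m ≤ ∑ m, ((if w / 2 ≤ g m then (1 : ℝ) else 0) + w / 2) := by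
    refine sum_le_sum fun m _ => ?_
    split_ifs with h
    · linarith [hg m]
    · linarith
  rw [sum_add_distrib, sum_boole, sum_const, card_univ, Fintype.card_fin, nsmul_eq_mul] at hsum
  linarith

lemma sqrt_exp_div_le {r η t M : ℝ} (ht : 0 < t) (hM : Real.exp (r + η) ≤ M)
    (hη : (t⁻¹) ^ 2 ≤ Real.exp η) : √(Real.exp r / M) ≤ t := by
  rw [Real.sqrt_le_left ht.le, div_le_iff₀ ((Real.exp_pos _).trans_le hM)]
  have hone : 1 ≤ t ^ 2 * Real.exp η := by
    rwa [inv_pow, inv_le_iff_one_le_mul₀' (by positivity)] at hη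
  calc Real.exp r ≤ Real.exp r * (t ^ 2 * Real.exp η) :=
        le_mul_of_one_le_right (Real.exp_pos r).le hone
    _ = t ^ 2 * Real.exp (r + η) := by rw [Real.exp_add]; ring
    _ ≤ t ^ 2 * M := by gcongr

lemma log_le_exp_of_mul_le_pow {u c ε : ℝ} {n k s M : ℕ} (hu : 0 < u) (hc : 0 ≤ c)
    (hM : (M : ℝ) ≤ 2 * Real.exp (n * c)) (hk : u * k ≤ (s : ℝ) ^ (n * M))
    (hε : |Real.log u| + n * (2 * Real.log s) ≤ Real.exp (n * ε)) :
    Real.log k ≤ Real.exp (n * (c + ε)) := by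
  rcases k.eq_zero_or_pos with rfl | hkpos
  · simpa using (Real.exp_pos _).le
  have hlog := Real.log_le_log (by positivity) hk
  rw [Real.log_mul hu.ne' (by positivity), Real.log_pow, Nat.cast_mul] at hlog
  have hone : 1 ≤ Real.exp (n * c) := Real.one_le_exp (by positivity)
  calc Real.log k ≤ |Real.log u| + n * M * Real.log s := by linarith [neg_abs_le (Real.log u)]
    _ ≤ |Real.log u| * Real.exp (n * c) + n * (2 * Real.exp (n * c)) * Real.log s := by
        gcongr
        exact le_mul_of_one_le_right (abs_nonneg _) hone
    _ = (|Real.log u| + n * (2 * Real.log s)) * Real.exp (n * c) := by ring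
    _ ≤ Real.exp (n * ε) * Real.exp (n * c) := by gcongr
    _ = Real.exp (n * (c + ε)) := by rw [← Real.exp_add]; ring_nf

lemma eventually_add_mul_le_exp (a b : ℝ) {ε : ℝ} (hε : 0 < ε) :
    ∀ᶠ n : ℕ in Filter.atTop, a + n * b ≤ Real.exp (n * ε) := by
  filter_upwards [tendsto_natCast_atTop_atTop.eventually_ge_atTop (1 : ℝ),
    tendsto_natCast_atTop_atTop.eventually_ge_atTop (2 * (|a| + b) / ε ^ 2)] with n hone hn
  rw [div_le_iff₀ (by positivity)] at hn
  calc a + n * b ≤ n * (|a| + b) := by nlinarith [le_abs_self a, abs_nonneg a]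
    _ ≤ 1 + n * ε + (n * ε) ^ 2 / 2 := by
        nlinarith [mul_le_mul_of_nonneg_left hn (zero_le_one.trans hone)]
    _ ≤ Real.exp (n * ε) := Real.quadratic_le_exp_of_nonneg (by positivity)

lemma IDCodeErr.log_card_le {A : Type*} [Fintype A] {V : A → B → ℝ} {k : ℕ}
    {p : Fin k → (Fin n → A) → ℝ} {D : Fin k → Finset (Fin n → B)} {w c η : ℝ} {q : B → ℝ}
    (h : IDCodeErr n V p D (w / 16) (w / 16)) (hV : IsChannel V) (hp : ∀ m, IsPMF (p m))
    (hq : IsPMF q) (hqpos : ∀ b, 0 < q b) (hw : 0 < w) (hc : 0 ≤ c) (hη : 0 < η)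
    (hmass : w / 2 * k ≤ ∑ m, ∑ a, p m a * ∑ b ∈ typicalOutputs V q (n * c) a, Wn V n a b)
    (hsqrt : ((w / 32)⁻¹) ^ 2 ≤ Real.exp (n * η))
    (hlog : |Real.log (w / 4)| + n * (2 * Real.log (Fintype.card A)) ≤ Real.exp (n * η)) :
    Real.log k ≤ Real.exp (n * (c + 2 * η)) := by
  set M := ⌈Real.exp (n * (c + η))⌉₊
  have hM : Real.exp (n * c + n * η) ≤ M := by
    rw [← mul_add]
    exact Nat.le_ceil _
  have hM' : (M : ℝ) ≤ 2 * Real.exp (n * (c + η)) := by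
    linarith [Nat.ceil_lt_add_one (Real.exp_pos (n * (c + η))).le,
      Real.one_le_exp (show 0 ≤ n * (c + η) by positivity)]
  have hle_one (m : Fin k) :
      ∑ a, p m a * ∑ b ∈ typicalOutputs V q (n * c) a, Wn V n a b ≤ 1 := by
    rw [← (hp m).2]
    refine sum_le_sum fun a _ => mul_le_of_le_one_right ((hp m).1 a) ?_
    rw [← (isChannel_Wn hV n).2 a]
    exact sum_le_univ_sum_of_nonneg ((isChannel_Wn hV n).1 a)
  have hcard := h.card_le_pow hV hp hq hqpos (r := n * c) (M := M) (Nat.ceil_pos.2 (Real.exp_pos _))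
    (s := {m | w / 2 / 2 ≤ ∑ a, p m a * ∑ b ∈ typicalOutputs V q (n * c) a, Wn V n a b})
    fun m hm => by linarith [(mem_filter.1 hm).2, sqrt_exp_div_le (by positivity) hM hsqrt]
  have hpow : w / 4 * k ≤ (Fintype.card A : ℝ) ^ (n * M) := by
    have := (half_mul_le_card_filter (by positivity) hle_one hmass).trans (Nat.cast_le.2 hcard)
    push_cast at this
    linarith
  convert log_le_exp_of_mul_le_pow (by positivity) (by positivity) hM' hpow hlog using 3
  ring

lemma exists_nhds_log_card_le (hU : IsChannel U) (hV : IsChannel V) {P : X → ℝ} (hP : IsPMF P)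
    {ε : ℝ} (hε : 0 < ε) :
    ∃ N ∈ nhds P, ∀ w > 0, ∀ᶠ n : ℕ in Filter.atTop, ∀ (k : ℕ)
      (p : Fin k → (Fin n → X × Y) → ℝ) (D : Fin k → Finset (Fin n → B)),
      (∀ m, p m ∈ feedbackInputs n U) → IDCodeErr n V p D (w / 16) (w / 16) →
      w * k ≤ ∑ m, typeMass N (p m) →
      Real.log k ≤ Real.exp (n * (mutInf (jointDist P U) V + ε)) := by
  set I := mutInf (jointDist P U) V
  set η := ε / 5 with hη
  have hηpos : 0 < η := by positivity
  have hPU := isPMF_jointDist hP hU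
  have hI : 0 ≤ I := mutInf_nonneg hPU hV
  obtain ⟨q, hq, hqpos, hqI⟩ := exists_pos_isPMF_sum_log_div_le hPU hV hηpos
  rw [sum_jointDist_mul] at hqI
  obtain ⟨v, hv⟩ := exists_typeMass_le hU hV q (I + 2 * η) hηpos
  refine ⟨{P' | ∑ x, P' x * meanInfoDensity U V q x < I + 2 * η},
    (isOpen_lt (by fun_prop) continuous_const).mem_nhds (hqI.trans_lt (by linarith)),
    fun w hw => ?_⟩
  filter_upwards [Filter.eventually_gt_atTop 0,
    (tendsto_const_div_atTop_nhds_zero_nat v).eventually_le_const (half_pos hw),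
    eventually_add_mul_le_exp (((w / 32)⁻¹) ^ 2) 0 hηpos,
    eventually_add_mul_le_exp |Real.log (w / 4)| (2 * Real.log (Fintype.card (X × Y))) hηpos]
    with n hn hvn hsqrt hlog k p D hp h hmass
  have hsum := hmass.trans (sum_le_sum fun m _ => hv n hn (p m) (hp m))
  rw [sum_add_distrib, sum_const, card_univ, Fintype.card_fin, nsmul_eq_mul] at hsum
  have hvk : k * (v / n) ≤ w / 2 * k := by
    rw [mul_comm]
    gcongr
  convert h.log_card_le hV (fun m => isPMF_of_mem_feedbackInputs hU (hp m)) hq hqpos hw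
    (c := I + 2 * η + η) (by positivity) hηpos (by linarith) (by linarith) hlog using 3
  rw [hη]
  ring

end LocalConverse

section AchievableRates

lemma one_lt_and_exp_le_log_of_le_log_log {R : ℝ} {n k : ℕ} (hR : 0 < R)
    (h : R ≤ (1 / n) * Real.log (Real.log k)) : 1 < k ∧ Real.exp (n * R) ≤ Real.log k := by
  have hn : (0 : ℝ) < n := by
    rcases n.eq_zero_or_pos with rfl | hn
    · simp at h
      linarith
    · exact_mod_cast hn
  rw [one_div, inv_mul_eq_div, le_div_iff₀ hn, mul_comm] at h
  have hlog : 0 < Real.log k := by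
    refine (Real.log_natCast_nonneg k).lt_of_ne fun hzero => ?_
    rw [← hzero, Real.log_zero] at h
    linarith [mul_pos hn hR]
  refine ⟨?_, (Real.le_log_iff_exp_le hlog).1 h⟩
  by_contra! hk
  interval_cases k <;> simp at hlog

variable {X Y Z : Type*} [Fintype X] [Fintype Y] [Fintype Z] {W : X → Y → Z → ℝ} {R : ℝ × ℝ}

lemma FBAchievable.eventually_exists_code (hR : FBAchievable W R) {l : ℝ} (hl : 0 < l) :
    ∀ᶠ n : ℕ in Filter.atTop, ∃ (kY kZ : ℕ)
      (Q : Fin kY → Fin kZ → (i : ℕ) → (Fin i → X) → (Fin i → Y) → X → ℝ)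
      (DY : Fin kY → Finset (Fin n → Y)) (DZ : Fin kZ → Finset (Fin n → Z)),
      0 < kY ∧ 0 < kZ ∧ IsFBIDCode n kY kZ W Q DY DZ l l l l ∧
      (0 < R.1 → 1 < kY ∧ Real.exp (n * R.1) ≤ Real.log kY) ∧
      (0 < R.2 → 1 < kZ ∧ Real.exp (n * R.2) ≤ Real.log kZ) := by
  obtain ⟨hR1, hR2, hcodes⟩ := hR
  obtain ⟨n₀, hn₀⟩ := hcodes l l l l hl hl hl hl
  filter_upwards [Filter.eventually_ge_atTop n₀] with n hn
  obtain ⟨kY, kZ, Q, DY, DZ, hcode, ⟨hkY, hkY_zero⟩, hkZ, hkZ_zero⟩ := hn₀ n hn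
  have hpos {r : ℝ} {k : ℕ} (hr : 0 ≤ r) (hk : 0 < r → r ≤ (1 / n) * Real.log (Real.log k))
      (hk_zero : r = 0 → k = 1) : 0 < k := by
    rcases hr.eq_or_lt with h | h
    · exact (hk_zero h.symm).symm ▸ one_pos
    · exact zero_lt_one.trans (one_lt_and_exp_le_log_of_le_log_log h (hk h)).1
  exact ⟨kY, kZ, Q, DY, DZ, hpos hR1 hkY hkY_zero, hpos hR2 hkZ hkZ_zero, hcode,
    fun h => one_lt_and_exp_le_log_of_le_log_log h (hkY h),
    fun h => one_lt_and_exp_le_log_of_le_log_log h (hkZ h)⟩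

lemma FBAchievable.fst_eq_zero (hW : IsBC W) (hR : FBAchievable W R) {q : Y → ℝ}
    (hq : ∀ x, margY W x = q) : R.1 = 0 := by
  by_contra hne
  obtain ⟨n, kY, kZ, Q, DY, DZ, -, hkZ, hcode, hkY, -⟩ :=
    (hR.eventually_exists_code (l := 1 / 3) (by norm_num)).exists
  have hinput (m : Fin kY) : meanPairLaw n (margY W) (Q m) ∈ feedbackInputs n (margY W) :=
    meanPairLaw_mem_feedbackInputs hkZ (hcode.1 m)
  have hone := (hkY (lt_of_le_of_ne hR.1 (Ne.symm hne))).1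
  refine absurd ((hcode.idCodeErr_fst hW).eq_of_outDist_eq isChannel_receiveY
    (fun m => isPMF_of_mem_feedbackInputs (isChannel_margY hW) (hinput m)) (by norm_num)
    (fun m => outDist_Wn_eq_prod (o := q) (hinput m) fun x y => ?_)
    ⟨0, zero_lt_one.trans hone⟩ ⟨1, hone⟩) (by simp)
  simp [receiveY, ← hq x]

lemma FBAchievable.snd_eq_zero (hW : IsBC W) (hR : FBAchievable W R) {q : Z → ℝ}
    (hq : ∀ x, margZ W x = q) : R.2 = 0 := by
  by_contra hne
  obtain ⟨V, hV⟩ := exists_isDisintegration hW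
  obtain ⟨n, kY, kZ, Q, DY, DZ, hkY, -, hcode, -, hkZ⟩ :=
    (hR.eventually_exists_code (l := 1 / 3) (by norm_num)).exists
  have hinput (m : Fin kZ) : meanPairLaw n (margY W) (Q · m) ∈ feedbackInputs n (margY W) :=
    meanPairLaw_mem_feedbackInputs hkY fun my => hcode.1 my m
  have hone := (hkZ (lt_of_le_of_ne hR.2.1 (Ne.symm hne))).1
  refine absurd ((hcode.idCodeErr_snd hV).eq_of_outDist_eq hV.1
    (fun m => isPMF_of_mem_feedbackInputs (isChannel_margY hW) (hinput m)) (by norm_num)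
    (fun m => outDist_Wn_eq_prod (o := q) (hinput m) fun x z => ?_)
    ⟨0, zero_lt_one.trans hone⟩ ⟨1, hone⟩) (by simp)
  rw [hV.sum_margY_mul, hq]

section CommonInput

variable {n : ℕ} {N N' : Set (X → ℝ)} {U : X → Y → ℝ}

lemma typeMass_mono (hN : N ⊆ N') {p : (Fin n → X × Y) → ℝ} (hp : ∀ a, 0 ≤ p a) :
    typeMass N p ≤ typeMass N' p :=
  sum_le_sum_of_subset_of_nonneg (monotone_filter_right _ fun _ _ h => hN h) fun a _ _ => hp a

lemma one_le_sum_typeMass {ι : Type*} {t : Finset ι} {N : ι → Set (X → ℝ)}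
    (hcover : stdSimplex ℝ X ⊆ ⋃ i ∈ t, N i) (hn : 0 < n) {p : (Fin n → X × Y) → ℝ}
    (hp : IsPMF p) : 1 ≤ ∑ i ∈ t, typeMass (N i) p := by
  simp only [typeMass, sum_filter]
  rw [sum_comm, ← hp.2]
  refine sum_le_sum fun a _ => ?_
  obtain ⟨i, hi, hai⟩ := Set.mem_iUnion₂.1 (hcover (empDist_mem_stdSimplex hn fun i => (a i).1))
  refine le_of_eq_of_le (if_pos hai).symm
    (single_le_sum (f := fun i => if empDist (fun i => (a i).1) ∈ N i then p a else 0)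
      (fun i _ => ?_) hi)
  have := hp.1 a
  positivity

lemma typeMass_meanPairLaw {k : ℕ}
    (Q : Fin k → (i : ℕ) → (Fin i → X) → (Fin i → Y) → X → ℝ) :
    typeMass N (meanPairLaw n U Q) = (k : ℝ)⁻¹ * ∑ j, typeMass N (pairLaw n U (Q j)) := by
  simpa only [typeMass, sum_filter, mul_ite, mul_one, mul_zero] using
    sum_meanPairLaw_mul (U := U) Q fun a => if empDist (fun i => (a i).1) ∈ N then 1 else 0

lemma exists_mul_le_sum_typeMass_meanPairLaw {ι : Type*} {t : Finset ι} (ht : t.Nonempty)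
    {N : ι → Set (X → ℝ)} (hcover : stdSimplex ℝ X ⊆ ⋃ i ∈ t, N i) (hn : 0 < n)
    (hU : IsChannel U) {kY kZ : ℕ} (hkY : 0 < kY) (hkZ : 0 < kZ)
    {Q : Fin kY → Fin kZ → (i : ℕ) → (Fin i → X) → (Fin i → Y) → X → ℝ}
    (hQ : ∀ my mz, IsFBEncoder n (Q my mz)) :
    ∃ i ∈ t, (#t : ℝ)⁻¹ * kY ≤ ∑ my, typeMass (N i) (meanPairLaw n U (Q my)) ∧
      (#t : ℝ)⁻¹ * kZ ≤ ∑ mz, typeMass (N i) (meanPairLaw n U (Q · mz)) := by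
  have hp (my mz) : IsPMF (pairLaw n U (Q my mz)) :=
    isPMF_of_mem_feedbackInputs hU (subset_convexHull ℝ _ ⟨_, hQ my mz, rfl⟩)
  obtain ⟨i, hi, hmass⟩ : ∃ i ∈ t, (#t : ℝ)⁻¹ * (kY * kZ) ≤
      ∑ my, ∑ mz, typeMass (N i) (pairLaw n U (Q my mz)) := by
    refine exists_le_of_sum_le ht ?_
    calc ∑ _i ∈ t, (#t : ℝ)⁻¹ * (kY * kZ) = ∑ _my : Fin kY, ∑ _mz : Fin kZ, 1 := by
          simp [ht.card_ne_zero]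
      _ ≤ ∑ my, ∑ mz, ∑ i ∈ t, typeMass (N i) (pairLaw n U (Q my mz)) := by
          gcongr with my _ mz _
          exact one_le_sum_typeMass hcover hn (hp my mz)
      _ = ∑ i ∈ t, ∑ my, ∑ mz, typeMass (N i) (pairLaw n U (Q my mz)) := by
          simp only [sum_comm (s := t)]
  refine ⟨i, hi, ?_, ?_⟩ <;>
    simp only [typeMass_meanPairLaw, ← mul_sum] <;> rw [le_inv_mul_iff₀ (by positivity)]
  · linarith
  · rw [sum_comm]
    linarith

lemma exists_nhds_log_card_le_of_isFBIDCode (hW : IsBC W) {V : X × Y → Z → ℝ}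
    (hV : IsDisintegration W V) {P : X → ℝ} (hP : IsPMF P) {ε : ℝ} (hε : 0 < ε) :
    ∃ N ∈ nhds P, ∀ w > 0, ∀ᶠ n : ℕ in Filter.atTop, ∀ (kY kZ : ℕ)
      (Q : Fin kY → Fin kZ → (i : ℕ) → (Fin i → X) → (Fin i → Y) → X → ℝ)
      (DY : Fin kY → Finset (Fin n → Y)) (DZ : Fin kZ → Finset (Fin n → Z)), 0 < kY → 0 < kZ →
      IsFBIDCode n kY kZ W Q DY DZ (w / 16) (w / 16) (w / 16) (w / 16) →
      w * kY ≤ ∑ my, typeMass N (meanPairLaw n (margY W) (Q my)) →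
      w * kZ ≤ ∑ mz, typeMass N (meanPairLaw n (margY W) (Q · mz)) →
      Real.log kY ≤
          Real.exp (n * (mutInf (jointDist P (margY W)) (receiveY X Y) + ε)) ∧
        Real.log kZ ≤ Real.exp (n * (mutInf (jointDist P (margY W)) V + ε)) := by
  have hU := isChannel_margY hW
  obtain ⟨NY, hNY, hY⟩ := exists_nhds_log_card_le hU isChannel_receiveY hP hε
  obtain ⟨NZ, hNZ, hZ⟩ := exists_nhds_log_card_le hU hV.1 hP hε
  refine ⟨NY ∩ NZ, Filter.inter_mem hNY hNZ, fun w hw => ?_⟩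
  filter_upwards [hY w hw, hZ w hw] with n hY hZ kY kZ Q DY DZ hkY hkZ hcode hmassY hmassZ
  have hinputY (my) := meanPairLaw_mem_feedbackInputs (U := margY W) hkZ (hcode.1 my)
  have hinputZ (mz) := meanPairLaw_mem_feedbackInputs (U := margY W) hkY (hcode.1 · mz)
  exact ⟨hY kY _ DY hinputY (hcode.idCodeErr_fst hW) <| hmassY.trans <| sum_le_sum fun my _ =>
      typeMass_mono Set.inter_subset_left (isPMF_of_mem_feedbackInputs hU (hinputY my)).1,
    hZ kZ _ DZ hinputZ (hcode.idCodeErr_snd hV) <| hmassZ.trans <| sum_le_sum fun mz _ =>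
      typeMass_mono Set.inter_subset_right (isPMF_of_mem_feedbackInputs hU (hinputZ mz)).1⟩

lemma FBAchievable.exists_le_mutInf_add [Nonempty X] (hW : IsBC W) (hR : FBAchievable W R)
    {V : X × Y → Z → ℝ} (hV : IsDisintegration W V) {ε : ℝ} (hε : 0 < ε) :
    ∃ P, IsPMF P ∧ R.1 ≤ mutInf (jointDist P (margY W)) (receiveY X Y) + ε ∧
      R.2 ≤ mutInf (jointDist P (margY W)) V + ε := by
  have hU := isChannel_margY hW
  choose N hN hlog using fun P : stdSimplex ℝ X =>
    exists_nhds_log_card_le_of_isFBIDCode hW hV P.2 hε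
  obtain ⟨t, hcover⟩ := (isCompact_stdSimplex ℝ X).elim_nhds_subcover'
    (fun P hP => N ⟨P, hP⟩) fun P hP => hN ⟨P, hP⟩
  have ht : t.Nonempty := by
    obtain ⟨x⟩ := ‹Nonempty X›
    obtain ⟨P, hP, -⟩ := Set.mem_iUnion₂.1 (hcover (single_mem_stdSimplex ℝ x))
    exact ⟨P, hP⟩
  have hw : (0 : ℝ) < (#t : ℝ)⁻¹ := inv_pos.2 (Nat.cast_pos.2 ht.card_pos)
  obtain ⟨n, hn, hlog, kY, kZ, Q, DY, DZ, hkY, hkZ, hcode, hRY, hRZ⟩ :=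
    ((Filter.eventually_gt_atTop 0).and (((Finset.eventually_all t).2 fun P _ => hlog P _ hw).and
      (hR.eventually_exists_code (div_pos hw (by norm_num : (0 : ℝ) < 16))))).exists
  obtain ⟨P, hP, hmassY, hmassZ⟩ :=
    exists_mul_le_sum_typeMass_meanPairLaw ht hcover hn hU hkY hkZ hcode.1
  obtain ⟨hlogY, hlogZ⟩ := hlog P hP kY kZ Q DY DZ hkY hkZ hcode hmassY hmassZ
  have hrate {r c : ℝ} (hc : 0 ≤ c) (h : 0 < r → Real.exp (n * r) ≤ Real.exp (n * c)) : r ≤ c := by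
    by_contra! hrc
    exact (h (hc.trans_lt hrc)).not_gt (by gcongr)
  have hPU := isPMF_jointDist P.2 hU
  have hIY := mutInf_nonneg hPU (isChannel_receiveY (X := X) (Y := Y))
  have hIZ := mutInf_nonneg hPU hV.1
  exact ⟨P, P.2, hrate (by positivity) fun h => (hRY h).2.trans hlogY,
    hrate (by positivity) fun h => (hRZ h).2.trans hlogZ⟩

end CommonInput

end AchievableRates

section Closure

lemma exists_le_and_le_of_mem_closure {E : Type*} [TopologicalSpace E] {K : Set E}
    (hK : IsCompact K) {f g : E → ℝ} (hf : ContinuousOn f K) (hg : ContinuousOn g K)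
    {S : Set (ℝ × ℝ)} (hS : ∀ R ∈ S, ∀ ε > 0, ∃ P ∈ K, R.1 ≤ f P + ε ∧ R.2 ≤ g P + ε)
    {p : ℝ × ℝ} (hp : p ∈ closure S) : ∃ P ∈ K, p.1 ≤ f P ∧ p.2 ≤ g P := by
  have happrox (ε : ℝ) (hε : 0 < ε) : ∃ P ∈ K, max (p.1 - f P) (p.2 - g P) ≤ ε := by
    obtain ⟨R, hR, hdist⟩ := Metric.mem_closure_iff.1 hp (ε / 2) (half_pos hε)
    obtain ⟨P, hP, h1, h2⟩ := hS R hR (ε / 2) (half_pos hε)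
    rw [Prod.dist_eq, max_lt_iff, Real.dist_eq, Real.dist_eq, abs_lt, abs_lt] at hdist
    exact ⟨P, hP, max_le (by linarith) (by linarith)⟩
  obtain ⟨P₁, hP₁, -⟩ := happrox 1 one_pos
  obtain ⟨P, hP, hmin⟩ := hK.exists_isMinOn ⟨P₁, hP₁⟩
    (f := fun P => max (p.1 - f P) (p.2 - g P)) (by fun_prop)
  have hle : max (p.1 - f P) (p.2 - g P) ≤ 0 := le_of_forall_pos_le_add fun ε hε => by
    obtain ⟨P', hP', h⟩ := happrox ε hε
    rw [zero_add]
    exact (hmin hP').trans h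
  exact ⟨P, hP, by linarith [(max_le_iff.1 hle).1], by linarith [(max_le_iff.1 hle).2]⟩

lemma exists_isPMF_le_of_mem_closure_fbAchievable {X Y Z : Type*} [Fintype X] [Fintype Y]
    [Fintype Z] [Nonempty X] {W : X → Y → Z → ℝ} (hW : IsBC W) {p : ℝ × ℝ}
    (hp : p ∈ closure {R : ℝ × ℝ | FBAchievable W R}) :
    ∃ P, IsPMF P ∧ p.1 ≤ entH (outDist P (margY W)) ∧ p.2 ≤ mutInfXY_Z P W := by
  have hU := isChannel_margY hW
  obtain ⟨V, hV⟩ := exists_isDisintegration hW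
  have hsubset : stdSimplex ℝ X ⊆ {P | ∀ x, 0 ≤ P x} := fun P hP => hP.1
  obtain ⟨P, hP, hle⟩ := exists_le_and_le_of_mem_closure (isCompact_stdSimplex ℝ X)
    ((continuousOn_mutInf_jointDist hU.1 isChannel_receiveY.1).mono hsubset)
    ((continuousOn_mutInf_jointDist hU.1 hV.1.1).mono hsubset)
    (fun R hR ε hε => hR.exists_le_mutInf_add hW hV hε) hp
  rw [mutInf_receiveY hP.1 hU.1, hV.mutInf_eq] at hle
  exact ⟨P, hP, hle⟩

end Closure

/-- **Theorem 12.** Outer bound on the ID capacity region of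
the BC with one-sided feedback from Terminal Y. -/
theorem bc_fb_id_outer_bound
    {X Y Z : Type} [Fintype X] [Fintype Y] [Fintype Z]
    [Nonempty X] [Nonempty Y] [Nonempty Z]
    (W : X → Y → Z → ℝ) (hW : IsBC W) :
    closure {p : ℝ × ℝ | FBAchievable W p}
      ⊆ {p : ℝ × ℝ | 0 ≤ p.1 ∧ 0 ≤ p.2 ∧
          ∃ P : X → ℝ, IsPMF P ∧
            p.1 ≤ (if ∃ P' : X → ℝ, IsPMF P' ∧ 0 < mutInf P' (margY W) then
                      entH (outDist P (margY W)) else 0) ∧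
            p.2 ≤ (if ∃ P' : X → ℝ, IsPMF P' ∧ 0 < mutInf P' (margZ W) then
                      mutInfXY_Z P W else 0)} := by
  intro p hp
  have hclosed {s : Set (ℝ × ℝ)} (hs : IsClosed s) (h : ∀ R, FBAchievable W R → R ∈ s) : p ∈ s :=
    closure_minimal h hs hp
  refine ⟨hclosed (isClosed_le continuous_const continuous_fst) fun R hR => hR.1,
    hclosed (isClosed_le continuous_const continuous_snd) fun R hR => hR.2.1, ?_⟩
  obtain ⟨P, hP, hP1, hP2⟩ := exists_isPMF_le_of_mem_closure_fbAchievable hW hp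
  refine ⟨P, hP, ?_, ?_⟩
  · split_ifs with hpos
    · exact hP1
    · push Not at hpos
      obtain ⟨q, hq⟩ := exists_forall_eq_of_forall_mutInf_nonpos (isChannel_margY hW) hpos
      exact (hclosed (isClosed_eq continuous_fst continuous_const)
        fun R hR => hR.fst_eq_zero hW hq).le
  · split_ifs with hpos
    · exact hP2
    · push Not at hpos
      obtain ⟨q, hq⟩ := exists_forall_eq_of_forall_mutInf_nonpos (isChannel_margZ hW) hpos
      exact (hclosed (isClosed_eq continuous_snd continuous_const)
        fun R hR => hR.snd_eq_zero hW hq).le
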